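/- Define H:[0,∞)→ℝ by H(a) := ∫_{ℝ^d} max(a, |z|)·(|z|² − d)·ζ(z) dz. Then H is infinitely differentiable on [0,∞) (one-sided at 0), with H'(a) = ∫_{|z| ≤ a} (|z|² − d) ζ(z) dz; moreover H(0) = ∫_{ℝ^d} |z| ζ(z) dz = √2·Γ(d/2+1/2)/Γ(d/2) > 0, H'(0) = 0, H'(a) < 0 for every a > 0 (so H is strictly decreasing on (0,∞)), and H(a) → 0 as a → +∞. -/

import Mathlib

open MeasureTheory Filter Set Real Topology
open scoped NNReal ENNReal

noncomputable section

/-- Euclidean space `ℝ^d`. -/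
abbrev EucSp (d : ℕ) := EuclideanSpace ℝ (Fin d)

/-- Standard Gaussian density `ζ(z) = (2π)^{−d/2} e^{−|z|²/2}` on `ℝ^d`. -/
def gauss (d : ℕ) (z : EucSp d) : ℝ := (2 * π) ^ (-(d:ℝ)/2) * Real.exp (-‖z‖^2/2)

/-- `C_ζ := ∫_{ℝ^d} |z| ζ(z) dz`. -/
def Cz (d : ℕ) : ℝ := ∫ z : EucSp d, ‖z‖ * gauss d z

/-!
Let `p` be the density of `|Z|` for a standard Gaussian vector `Z` in `ℝ^d`. Since
`(r p(r))' = (d - r²) p(r)`, integrating `max(a, r) (r² - d) p(r)` by parts over `(0, ∞)` gives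
`H(a) = ∫_a^∞ r p(r) dr = 𝔼[|Z|; |Z| > a]`, whose derivative is `-a p(a)`.
-/

section TailIntegral

variable {E : Type*} [NormedAddCommGroup E] [NormedSpace ℝ E]

theorem hasDerivAt_integral_Ioi [CompleteSpace E] {f : ℝ → E} {a : ℝ} (hf : Integrable f)
    (hfa : ContinuousAt f a) : HasDerivAt (fun x ↦ ∫ r in Ioi x, f r) (-f a) a := by
  have tail_eq : (fun x ↦ ∫ r in Ioi x, f r) = fun x ↦ (∫ r in Ioi a, f r) - ∫ r in a..x, f r := by
    ext x
    rw [← intervalIntegral.integral_Ioi_sub_Ioi' hf.integrableOn hf.integrableOn, sub_sub_cancel]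
  rw [tail_eq]
  exact (intervalIntegral.integral_hasDerivAt_right hf.intervalIntegrable
    hf.aestronglyMeasurable.stronglyMeasurableAtFilter hfa).const_sub _

theorem contDiff_integral_Ioi [CompleteSpace E] {f : ℝ → E} {n : ℕ∞} (hf : Integrable f)
    (hfn : ContDiff ℝ n f) : ContDiff ℝ (n + 1) fun x ↦ ∫ r in Ioi x, f r := by
  have hderiv (a : ℝ) : HasDerivAt (fun x ↦ ∫ r in Ioi x, f r) (-f a) a :=
    hasDerivAt_integral_Ioi hf hfn.continuous.continuousAt
  refine contDiff_succ_iff_deriv.2 ⟨fun a ↦ (hderiv a).differentiableAt, by simp, ?_⟩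
  rw [funext fun a ↦ (hderiv a).deriv]
  exact hfn.neg

theorem strictAntiOn_integral_Ioi {f : ℝ → ℝ} {b : ℝ} (hf : IntegrableOn f (Ioi b))
    (hpos : ∀ x ∈ Ioi b, 0 < f x) : StrictAntiOn (fun x ↦ ∫ r in Ioi x, f r) (Ici b) := by
  intro x hx y _ hxy
  have hfx : IntegrableOn f (Ioi x) := hf.mono_set (Ioi_subset_Ioi hx)
  have hxy_pos : 0 < ∫ r in x..y, f r :=
    intervalIntegral.intervalIntegral_pos_of_pos_on
      ((intervalIntegrable_iff_integrableOn_Ioc_of_le hxy.le).2 (hfx.mono_set Ioc_subset_Ioi_self))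
      (fun r hr ↦ hpos r (lt_of_le_of_lt hx hr.1)) hxy
  rwa [← intervalIntegral.integral_Ioi_sub_Ioi hfx hxy.le, sub_pos] at hxy_pos

theorem integral_Ioi_max_mul_deriv {G G' : ℝ → ℝ} {a b : ℝ} (hba : b ≤ a)
    (hG : ∀ x ∈ Ici b, HasDerivAt G (G' x) x) (hG' : IntervalIntegrable G' volume b a)
    (hGa : IntegrableOn G (Ioi a)) (hxG' : IntegrableOn (fun x ↦ x * G' x) (Ioi a))
    (hlim : Tendsto (fun x ↦ x * G x) atTop (𝓝 0)) :
    ∫ x in Ioi b, max a x * G' x = -(a * G b) - ∫ x in Ioi a, G x := by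
  have below : EqOn (fun x ↦ max a x * G' x) (fun x ↦ a * G' x) (uIcc b a) := fun x hx ↦ by
    simp only [max_eq_left (uIcc_of_le hba ▸ hx).2]
  have above : EqOn (fun x ↦ max a x * G' x) (fun x ↦ x * G' x) (Ioi a) := fun x hx ↦ by
    simp only [max_eq_right (mem_Ioi.1 hx).le]
  have integral_below : ∫ x in b..a, max a x * G' x = a * (G a - G b) := by
    rw [intervalIntegral.integral_congr below, intervalIntegral.integral_const_mul,
      intervalIntegral.integral_eq_sub_of_hasDerivAt
        (fun x hx ↦ hG x (uIcc_of_le hba ▸ hx).1) hG']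
  have integral_above : ∫ x in Ioi a, max a x * G' x = -(a * G a) - ∫ x in Ioi a, G x := by
    have hGcont : ContinuousAt G a := (hG a hba).continuousAt
    have by_parts := integral_Ioi_mul_deriv_eq_deriv_mul (u := fun x ↦ x) (u' := fun _ ↦ 1)
      (fun x _ ↦ hasDerivAt_id x) (fun x hx ↦ hG x (hba.trans (le_of_lt hx))) hxG'
      (by simpa [Pi.mul_def] using hGa)
      ((continuousAt_id.fun_mul hGcont).tendsto.mono_left nhdsWithin_le_nhds) hlim
    simpa only [setIntegral_congr_fun measurableSet_Ioi above, id, one_mul, zero_sub]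
      using by_parts
  have intervalIntegrable_below : IntervalIntegrable (fun x ↦ max a x * G' x) volume b a :=
    (hG'.const_mul a).congr (below.symm.mono uIoc_subset_uIcc)
  rw [← intervalIntegral.integral_interval_add_Ioi' intervalIntegrable_below
    (hxG'.congr_fun above.symm measurableSet_Ioi), integral_below, integral_above]
  ring

end TailIntegral

section GaussianMoments

theorem integrable_pow_mul_exp_neg_sq_div_two (k : ℕ) :
    Integrable fun r : ℝ ↦ r ^ k * exp (-r ^ 2 / 2) := by
  have hk : (-1 : ℝ) < k := neg_one_lt_zero.trans_le k.cast_nonneg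
  simpa only [rpow_natCast, neg_mul, one_div_mul_eq_div, neg_div]
    using integrable_rpow_mul_exp_neg_mul_sq one_half_pos hk

theorem tendsto_pow_mul_exp_neg_sq_div_two (k : ℕ) :
    Tendsto (fun r : ℝ ↦ r ^ k * exp (-r ^ 2 / 2)) atTop (𝓝 0) := by
  have exp_tendsto : Tendsto (fun r : ℝ ↦ exp (-(1 / 2) * r)) atTop (𝓝 0) :=
    tendsto_exp_atBot.comp (tendsto_id.const_mul_atTop_of_neg (by norm_num))
  simpa only [rpow_natCast, neg_mul, one_div_mul_eq_div, neg_div]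
    using (rpow_mul_exp_neg_mul_sq_isLittleO_exp_neg one_half_pos k).trans_tendsto exp_tendsto

theorem integral_Ioi_pow_mul_exp_neg_sq_div_two (k : ℕ) :
    ∫ r in Ioi (0 : ℝ), r ^ k * exp (-r ^ 2 / 2) =
      2 ^ (((k : ℝ) - 1) / 2) * Gamma (((k : ℝ) + 1) / 2) := by
  have hk : (-1 : ℝ) < k := neg_one_lt_zero.trans_le k.cast_nonneg
  have two_rpow : (1 / 2 : ℝ) ^ (-((k : ℝ) + 1) / 2) * (1 / 2) = 2 ^ (((k : ℝ) - 1) / 2) := by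
    rw [one_div, inv_rpow zero_le_two, ← rpow_neg zero_le_two, ← rpow_neg_one 2,
      ← rpow_add zero_lt_two]
    congr 1
    ring
  rw [← two_rpow, ← integral_rpow_mul_exp_neg_mul_rpow zero_lt_two hk one_half_pos]
  simp only [rpow_natCast, rpow_two, neg_mul, one_div_mul_eq_div, neg_div]

end GaussianMoments

section ChiDensity

/-- The density of the chi distribution with `d` degrees of freedom, i.e. of the norm of a standard
Gaussian vector in `ℝ^d`. Only its restriction to `[0, ∞)` is meaningful, and `d` should be positive
because of the exponent `d - 1`. -/
def chiDensity (d : ℕ) (r : ℝ) : ℝ :=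
  r ^ (d - 1) * exp (-r ^ 2 / 2) / (2 ^ ((d : ℝ) / 2 - 1) * Gamma ((d : ℝ) / 2))

/-- The partial expectation `𝔼[R; R > a]` of a chi-distributed variable `R` with `d` degrees of
freedom; for `a ≥ 0` it equals `H(a)`. -/
def chiPartialExpectation (d : ℕ) (a : ℝ) : ℝ := ∫ r in Ioi a, r * chiDensity d r

theorem contDiff_chiDensity (d : ℕ) {n : WithTop ℕ∞} : ContDiff ℝ n (chiDensity d) := by
  unfold chiDensity
  fun_prop

theorem integrable_pow_mul_chiDensity (d k : ℕ) : Integrable fun r ↦ r ^ k * chiDensity d r := by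
  simpa only [chiDensity, mul_div_assoc', ← mul_assoc, ← pow_add]
    using (integrable_pow_mul_exp_neg_sq_div_two (k + (d - 1))).div_const _

theorem integrable_id_mul_chiDensity (d : ℕ) : Integrable fun r ↦ r * chiDensity d r := by
  simpa only [pow_one] using integrable_pow_mul_chiDensity d 1

theorem tendsto_pow_mul_chiDensity (d k : ℕ) :
    Tendsto (fun r ↦ r ^ k * chiDensity d r) atTop (𝓝 0) := by
  simpa only [chiDensity, mul_div_assoc', ← mul_assoc, ← pow_add, zero_div]
    using (tendsto_pow_mul_exp_neg_sq_div_two (k + (d - 1))).div_const _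

theorem hasDerivAt_chiPartialExpectation (d : ℕ) (a : ℝ) :
    HasDerivAt (chiPartialExpectation d) (-(a * chiDensity d a)) a :=
  hasDerivAt_integral_Ioi (integrable_id_mul_chiDensity d)
    (continuous_id.mul (contDiff_chiDensity d (n := 0)).continuous).continuousAt

theorem contDiff_chiPartialExpectation (d : ℕ) : ContDiff ℝ (⊤ : ℕ∞) (chiPartialExpectation d) :=
  contDiff_integral_Ioi (n := ⊤) (integrable_id_mul_chiDensity d)
    (contDiff_id.mul (contDiff_chiDensity d))

theorem tendsto_chiPartialExpectation (d : ℕ) : Tendsto (chiPartialExpectation d) atTop (𝓝 0) :=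
  tendsto_integral_Ioi_zero tendsto_id

variable (d : ℕ) [NeZero d]

theorem two_rpow_mul_Gamma_half_pos : 0 < (2 : ℝ) ^ ((d : ℝ) / 2 - 1) * Gamma ((d : ℝ) / 2) :=
  have hd : (0 : ℝ) < d := Nat.cast_pos.2 (NeZero.pos d)
  mul_pos (rpow_pos_of_pos zero_lt_two _) (Gamma_pos_of_pos (half_pos hd))

theorem chiDensity_pos {r : ℝ} (hr : 0 < r) : 0 < chiDensity d r :=
  div_pos (mul_pos (pow_pos hr _) (exp_pos _)) (two_rpow_mul_Gamma_half_pos d)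

theorem id_mul_chiDensity (r : ℝ) :
    r * chiDensity d r =
      r ^ d * exp (-r ^ 2 / 2) / (2 ^ ((d : ℝ) / 2 - 1) * Gamma ((d : ℝ) / 2)) := by
  rw [chiDensity, mul_div_assoc', ← mul_assoc, mul_pow_sub_one (NeZero.ne d)]

theorem hasDerivAt_id_mul_chiDensity (r : ℝ) :
    HasDerivAt (fun r ↦ r * chiDensity d r) ((d - r ^ 2) * chiDensity d r) r := by
  have exp_deriv : HasDerivAt (fun r : ℝ ↦ exp (-r ^ 2 / 2)) (exp (-r ^ 2 / 2) * -r) r := by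
    convert! ((hasDerivAt_pow 2 r).fun_neg.div_const 2).exp using 2
    ring
  simp only [id_mul_chiDensity]
  convert! ((hasDerivAt_pow d r).mul exp_deriv).div_const _ using 1
  rw [chiDensity, ← mul_pow_sub_one (NeZero.ne d) r]
  ring

theorem integral_Ioi_chiDensity : ∫ r in Ioi 0, chiDensity d r = 1 := by
  have hd : 1 ≤ d := NeZero.one_le
  simp only [chiDensity, integral_div, integral_Ioi_pow_mul_exp_neg_sq_div_two]
  rw [div_eq_one_iff_eq (two_rpow_mul_Gamma_half_pos d).ne']
  push_cast [hd]
  ring_nf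

theorem chiPartialExpectation_zero :
    chiPartialExpectation d 0 = √2 * (Gamma ((d : ℝ) / 2 + 1 / 2) / Gamma ((d : ℝ) / 2)) := by
  have two_rpow : (2 : ℝ) ^ (((d : ℝ) - 1) / 2) = 2 ^ ((d : ℝ) / 2 - 1) * √2 := by
    rw [sqrt_eq_rpow, ← rpow_add zero_lt_two]
    congr 1
    ring
  simp only [chiPartialExpectation, id_mul_chiDensity, integral_div,
    integral_Ioi_pow_mul_exp_neg_sq_div_two]
  rw [two_rpow, add_div, mul_assoc, mul_div_mul_left _ _ (by positivity), mul_div_assoc]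

theorem intervalIntegral_sq_sub_mul_chiDensity (a : ℝ) :
    ∫ r in (0 : ℝ)..a, (r ^ 2 - d) * chiDensity d r = -(a * chiDensity d a) := by
  have hderiv (r : ℝ) :
      HasDerivAt (fun r ↦ -(r * chiDensity d r)) ((r ^ 2 - d) * chiDensity d r) r := by
    convert! (hasDerivAt_id_mul_chiDensity d r).fun_neg using 1
    ring
  have hcont : Continuous (chiDensity d) := (contDiff_chiDensity d (n := 0)).continuous
  rw [intervalIntegral.integral_eq_sub_of_hasDerivAt (fun r _ ↦ hderiv r)
    (Continuous.intervalIntegrable (by fun_prop) _ _)]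
  simp

theorem integral_max_mul_sq_sub_mul_chiDensity {a : ℝ} (ha : 0 ≤ a) :
    ∫ r in Ioi 0, max a r * (r ^ 2 - d) * chiDensity d r = chiPartialExpectation d a := by
  have hcont : Continuous (chiDensity d) := (contDiff_chiDensity d (n := 0)).continuous
  have hint : Integrable fun r ↦ r * ((d - r ^ 2) * chiDensity d r) := by
    convert! ((integrable_pow_mul_chiDensity d 1).const_mul (d : ℝ)).sub
      (integrable_pow_mul_chiDensity d 3) using 2
    simp only [Pi.sub_apply]
    ring
  have by_parts := integral_Ioi_max_mul_deriv ha
    (fun r _ ↦ hasDerivAt_id_mul_chiDensity d r)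
    (Continuous.intervalIntegrable (by fun_prop) _ _)
    (integrable_id_mul_chiDensity d).integrableOn hint.integrableOn
    (by simpa only [sq, mul_assoc] using tendsto_pow_mul_chiDensity d 2)
  rw [zero_mul, mul_zero, neg_zero, zero_sub] at by_parts
  rw [chiPartialExpectation, ← neg_eq_iff_eq_neg.2 by_parts, ← integral_neg]
  congr with r
  ring

theorem strictAntiOn_chiPartialExpectation : StrictAntiOn (chiPartialExpectation d) (Ici 0) :=
  strictAntiOn_integral_Ioi (integrable_id_mul_chiDensity d).integrableOn
    fun _ hr ↦ mul_pos hr (chiDensity_pos d hr)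

end ChiDensity

section GaussianNorm

theorem integral_gauss (d : ℕ) : ∫ z : EucSp d, gauss d z = 1 := by
  have exp_integral : ∫ z : EucSp d, exp (-‖z‖ ^ 2 / 2) = (2 * π) ^ ((d : ℝ) / 2) := by
    simpa [div_eq_inv_mul, mul_comm π]
      using GaussianFourier.integral_rexp_neg_mul_sq_norm (V := EucSp d) one_half_pos
  simp only [gauss, integral_const_mul, exp_integral]
  rw [← rpow_add two_pi_pos, neg_div, neg_add_cancel, rpow_zero]

variable (d : ℕ) [NeZero d]

theorem integral_fun_norm_mul_gauss (f : ℝ → ℝ) :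
    ∫ z : EucSp d, f ‖z‖ * gauss d z = ∫ r in Ioi 0, f r * chiDensity d r := by
  obtain ⟨C, hC⟩ : ∃ C : ℝ, ∀ f : ℝ → ℝ,
      ∫ z : EucSp d, f ‖z‖ * gauss d z = C * ∫ r in Ioi 0, f r * chiDensity d r := by
    refine ⟨d * (volume.real (Metric.ball (0 : EucSp d) 1) * ((2 * π) ^ (-(d : ℝ) / 2) *
      (2 ^ ((d : ℝ) / 2 - 1) * Gamma ((d : ℝ) / 2)))), fun f ↦ ?_⟩
    have polar := integral_fun_norm_addHaar (volume : Measure (EucSp d))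
      fun r ↦ f r * ((2 * π) ^ (-(d : ℝ) / 2) * exp (-r ^ 2 / 2))
    simp only [finrank_euclideanSpace, Fintype.card_fin, nsmul_eq_mul, smul_eq_mul] at polar
    simp only [gauss, polar, mul_assoc, ← integral_const_mul]
    congr with r
    have Gamma_ne_zero : Gamma ((d : ℝ) / 2) ≠ 0 :=
      right_ne_zero_of_mul (two_rpow_mul_Gamma_half_pos d).ne'
    rw [chiDensity]
    field_simp
  -- Testing on `f = 1` identifies the constant without computing the volume of the unit ball.
  have C_eq_one : C = 1 := by
    simpa [integral_gauss, integral_Ioi_chiDensity] using (hC 1).symm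
  rw [hC, C_eq_one, one_mul]

theorem setIntegral_fun_norm_mul_gauss (f : ℝ → ℝ) {a : ℝ} (ha : 0 ≤ a) :
    ∫ z in {z : EucSp d | ‖z‖ ≤ a}, f ‖z‖ * gauss d z = ∫ r in 0..a, f r * chiDensity d r := by
  calc ∫ z in {z : EucSp d | ‖z‖ ≤ a}, f ‖z‖ * gauss d z
      = ∫ z : EucSp d, (Iic a).indicator f ‖z‖ * gauss d z := by
        rw [← integral_indicator (measurableSet_le measurable_norm measurable_const)]
        congr with z
        simp [indicator_apply, ite_mul]
    _ = ∫ r in Ioi 0, (Iic a).indicator (fun r ↦ f r * chiDensity d r) r := by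
        simp only [integral_fun_norm_mul_gauss, indicator_mul_left]
    _ = ∫ r in 0..a, f r * chiDensity d r := by
        rw [setIntegral_indicator measurableSet_Iic, Ioi_inter_Iic,
          intervalIntegral.integral_of_le ha]

theorem Cz_eq_chiPartialExpectation : Cz d = chiPartialExpectation d 0 :=
  integral_fun_norm_mul_gauss d fun r ↦ r

theorem integral_max_norm_mul_gauss {a : ℝ} (ha : 0 ≤ a) :
    ∫ z : EucSp d, max a ‖z‖ * (‖z‖ ^ 2 - d) * gauss d z = chiPartialExpectation d a := by
  rw [integral_fun_norm_mul_gauss d fun r ↦ max a r * (r ^ 2 - d),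
    integral_max_mul_sq_sub_mul_chiDensity d ha]

theorem setIntegral_norm_sq_sub_mul_gauss {a : ℝ} (ha : 0 ≤ a) :
    ∫ z in {z : EucSp d | ‖z‖ ≤ a}, (‖z‖ ^ 2 - d) * gauss d z = -(a * chiDensity d a) := by
  rw [setIntegral_fun_norm_mul_gauss d (fun r ↦ r ^ 2 - d) ha,
    intervalIntegral_sq_sub_mul_chiDensity]

theorem Cz_eq_sqrt_two_mul_Gamma_div_Gamma :
    Cz d = √2 * (Gamma ((d : ℝ) / 2 + 1 / 2) / Gamma ((d : ℝ) / 2)) := by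
  rw [Cz_eq_chiPartialExpectation, chiPartialExpectation_zero]

theorem Cz_pos : 0 < Cz d := by
  have hd : (0 : ℝ) < d := Nat.cast_pos.2 (NeZero.pos d)
  rw [Cz_eq_sqrt_two_mul_Gamma_div_Gamma]
  positivity

end GaussianNorm

/-- The function `H(a) := ∫ max(a,|z|)(|z|²−d) ζ(z) dz` is infinitely
differentiable on `[0,∞)` (one-sided at `0`), with `H'(a) = ∫_{|z|≤a} (|z|²−d) ζ(z) dz`;
moreover `H(0) = ∫ |z| ζ(z) dz = √2 Γ(d/2+1/2)/Γ(d/2) > 0`, `H'(0) = 0`, `H'(a) < 0` for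
every `a > 0` (so `H` is strictly decreasing on `(0,∞)`), and `H(a) → 0` as `a → +∞`. -/
theorem H_strictly_decreasing (d : ℕ) (hd : 0 < d) :
    ContDiffOn ℝ (⊤ : ℕ∞) (fun a : ℝ => ∫ z : EucSp d, max a ‖z‖ * (‖z‖^2 - (d:ℝ)) * gauss d z)
      (Set.Ici 0) ∧
    (∀ a : ℝ, 0 ≤ a →
      HasDerivWithinAt
        (fun a : ℝ => ∫ z : EucSp d, max a ‖z‖ * (‖z‖^2 - (d:ℝ)) * gauss d z)
        (∫ z in {z : EucSp d | ‖z‖ ≤ a}, (‖z‖^2 - (d:ℝ)) * gauss d z)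
        (Set.Ici 0) a) ∧
    (∫ z : EucSp d, max 0 ‖z‖ * (‖z‖^2 - (d:ℝ)) * gauss d z) = Cz d ∧
    Cz d = Real.sqrt 2 * (Real.Gamma ((d:ℝ)/2 + 1/2) / Real.Gamma ((d:ℝ)/2)) ∧
    0 < Cz d ∧
    HasDerivWithinAt
      (fun a : ℝ => ∫ z : EucSp d, max a ‖z‖ * (‖z‖^2 - (d:ℝ)) * gauss d z)
      0 (Set.Ici 0) 0 ∧
    (∀ a : ℝ, 0 < a → (∫ z in {z : EucSp d | ‖z‖ ≤ a}, (‖z‖^2 - (d:ℝ)) * gauss d z) < 0) ∧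
    StrictAntiOn (fun a : ℝ => ∫ z : EucSp d, max a ‖z‖ * (‖z‖^2 - (d:ℝ)) * gauss d z)
      (Set.Ioi 0) ∧
    Tendsto (fun a : ℝ => ∫ z : EucSp d, max a ‖z‖ * (‖z‖^2 - (d:ℝ)) * gauss d z)
      atTop (nhds 0) := by
  have : NeZero d := ⟨hd.ne'⟩
  have H_eq : EqOn (fun a ↦ ∫ z : EucSp d, max a ‖z‖ * (‖z‖ ^ 2 - (d : ℝ)) * gauss d z)
      (chiPartialExpectation d) (Ici 0) := fun a ha ↦ integral_max_norm_mul_gauss d ha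
  have H_deriv (a : ℝ) (ha : 0 ≤ a) :=
    (hasDerivAt_chiPartialExpectation d a).hasDerivWithinAt.congr H_eq (H_eq ha)
  refine ⟨(contDiff_chiPartialExpectation d).contDiffOn.congr H_eq, fun a ha ↦ ?_,
    (H_eq self_mem_Ici).trans (Cz_eq_chiPartialExpectation d).symm,
    Cz_eq_sqrt_two_mul_Gamma_div_Gamma d, Cz_pos d, ?_, fun a ha ↦ ?_,
    ((strictAntiOn_chiPartialExpectation d).congr H_eq.symm).mono Ioi_subset_Ici_self,
    (tendsto_chiPartialExpectation d).congr' ?_⟩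
  · rw [setIntegral_norm_sq_sub_mul_gauss d ha]
    exact H_deriv a ha
  · simpa only [zero_mul, neg_zero] using H_deriv 0 le_rfl
  · rw [setIntegral_norm_sq_sub_mul_gauss d ha.le]
    exact neg_lt_zero.2 (mul_pos ha (chiDensity_pos d ha))
  · exact H_eq.symm.eventuallyEq_of_mem (Ici_mem_atTop 0)

end
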